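/- Let d ≥ 3 and 1 ≤ k ≤ d−1 be integers and ν < 0. For n ∈ ℕ^d define Q_{d−k,d}(n) = Σ_{F⊆{1,…,d−k}} Π_{l∈{1,…,d}∖F} n_l, where the sum is over all subsets F of {1,…,d−k} (including the empty set). Then lim_{a→∞} [Σ_{n∈ℕ^d} (Π_{i=1}^d a^{n_i}/n_i!) exp(ν · Q_{d−k,d}(n))] / [Σ_{n∈ℕ^d} (Π_{i=1}^d a^{n_i}/n_i!) exp(ν · n_1 n_2 ⋯ n_d)] = k/d. -/

import Mathlib

open Filter

/-- Product of convergent nonnegative series as a series over multi-indices. -/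
lemma hasSum_pi_prod : ∀ (d : ℕ) (f : Fin d → ℕ → ℝ) (s : Fin d → ℝ)
    (_ : ∀ i n, 0 ≤ f i n) (_ : ∀ i, HasSum (f i) (s i)),
    HasSum (fun n : Fin d → ℕ => ∏ i, f i (n i)) (∏ i, s i) := by
  intro d
  induction d with
  | zero =>
    intro f s _ _
    simp
  | succ d ih =>
    intro f s h0 hs
    have h1 := ih (fun i => f i.succ) (fun i => s i.succ) (fun i => h0 _) (fun i => hs _)
    have h2 := (hs 0).summable.mul_of_nonneg h1.summable (fun n => h0 0 n)
      (fun n => Finset.prod_nonneg fun i _ => h0 _ _)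
    have h3 := (hs 0).mul h1 h2
    rw [← (Fin.consEquiv (fun _ : Fin (d + 1) => ℕ)).hasSum_iff, Fin.prod_univ_succ]
    refine (congrArg (fun g => HasSum g (s 0 * ∏ i : Fin d, s i.succ)) ?_).mpr h3
    funext x
    simp [Fin.prod_univ_succ, Fin.consEquiv]

lemma hasSum_expo (x : ℝ) : HasSum (fun n : ℕ => x ^ n / (n.factorial : ℝ)) (Real.exp x) := by
  rw [Real.exp_eq_exp_ℝ]
  exact NormedSpace.expSeries_div_hasSum_exp x

lemma prod_two {d : ℕ} (i j : Fin d) (hij : j ≠ i) (A B E : ℝ) :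
    ∏ s : Fin d, (if s = i then A else if s = j then B else E) = A * B * E ^ (d - 2) := by
  rw [← Finset.mul_prod_erase Finset.univ _ (Finset.mem_univ i),
    ← Finset.mul_prod_erase (Finset.univ.erase i) _ (Finset.mem_erase.2 ⟨hij, Finset.mem_univ j⟩)]
  rw [Finset.prod_congr rfl (g := fun _ => E)]
  · simp only [if_true, hij, if_false, Finset.prod_const]
    rw [Finset.card_erase_of_mem (Finset.mem_erase.2 ⟨hij, Finset.mem_univ j⟩),
      Finset.card_erase_of_mem (Finset.mem_univ i), Finset.card_univ, Fintype.card_fin,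
      Nat.sub_sub, mul_assoc]
  · intro s hs
    simp only [Finset.mem_erase] at hs
    simp [hs.1, hs.2.1]

lemma pow_bound (c : ℝ) (hc0 : 0 < c) (hc1 : c < 1) (M m l : ℕ) (hm : 1 ≤ m) :
    c ^ (m * (1 + l)) ≤ (if m < M then 1 else 0) * c ^ l + c ^ m * (c ^ M) ^ l := by
  split_ifs with h
  · have h1 : c ^ (m * (1 + l)) ≤ c ^ l :=
      pow_le_pow_of_le_one hc0.le hc1.le (by nlinarith)
    have : 0 ≤ c ^ m * (c ^ M) ^ l := by positivity
    linarith
  · have h1 : c ^ (m * (1 + l)) ≤ c ^ (m + M * l) :=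
      pow_le_pow_of_le_one hc0.le hc1.le (by push Not at h; nlinarith)
    rw [pow_add, pow_mul c M l] at h1
    linarith

/-- The key two-sided bound. -/
lemma key_bound {d : ℕ} (T : Finset (Fin d)) (i j : Fin d) (hi : i ∈ T) (hij : j ≠ i)
    (ν : ℝ) (hν : ν < 0) (R : (Fin d → ℕ) → ℝ)
    (hR0 : ∀ n, (∃ l ∈ T, n l = 0) → R n = 0)
    (hR1 : ∀ n, (∀ l ∈ T, n l ≠ 0) → ((n i * (1 + n j) : ℕ) : ℝ) / 2 ≤ R n)
    (M : ℕ) (a : ℝ) (ha : 0 ≤ a) :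
    (Real.exp a) ^ d - (Real.exp a - 1) ^ T.card * (Real.exp a) ^ (d - T.card) ≤
      ∑' n : Fin d → ℕ, (∏ i, a ^ (n i) / ((n i).factorial : ℝ)) * Real.exp (ν * R n) ∧
    ∑' n : Fin d → ℕ, (∏ i, a ^ (n i) / ((n i).factorial : ℝ)) * Real.exp (ν * R n) ≤
      (Real.exp a) ^ d - (Real.exp a - 1) ^ T.card * (Real.exp a) ^ (d - T.card) +
      ((∑ m ∈ Finset.range M, a ^ m / (m.factorial : ℝ)) * Real.exp (a * Real.exp (ν / 2)) *
          (Real.exp a) ^ (d - 2) +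
        Real.exp (a * Real.exp (ν / 2)) * Real.exp (a * Real.exp (ν / 2) ^ M) *
          (Real.exp a) ^ (d - 2)) := by
  set c := Real.exp (ν / 2) with hc
  have hc0 : 0 < c := Real.exp_pos _
  have hc1 : c < 1 := by rw [hc, Real.exp_lt_one_iff]; linarith
  have hE := hasSum_expo a
  have hw0 : ∀ n : ℕ, 0 ≤ a ^ n / (n.factorial : ℝ) := fun n => by positivity
  -- the four product series
  have s1 := hasSum_pi_prod d (fun _ n => a ^ n / (n.factorial : ℝ)) (fun _ => Real.exp a)
    (fun _ n => hw0 n) (fun _ => hE)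
  have s2 := hasSum_pi_prod d
    (fun s n => if s ∈ T then (if n = 0 then 0 else a ^ n / (n.factorial : ℝ))
      else a ^ n / (n.factorial : ℝ))
    (fun s => if s ∈ T then Real.exp a - 1 else Real.exp a)
    (fun s n => by split_ifs <;> first | exact le_rfl | exact hw0 n)
    (fun s => by
      by_cases hs : s ∈ T
      · simp only [hs, if_true]
        have h := hE.sub (hasSum_ite_eq (0 : ℕ) (1 : ℝ))
        refine (congrArg (fun g => HasSum g (Real.exp a - 1)) ?_).mpr h
        funext n
        by_cases hn : n = 0
        · simp [hn]
        · simp [hn]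
      · simpa only [hs, if_false] using hE)
  have s3 := hasSum_pi_prod d
    (fun s n => if s = i then (if n < M then a ^ n / (n.factorial : ℝ) else 0)
      else if s = j then (a * c) ^ n / (n.factorial : ℝ) else a ^ n / (n.factorial : ℝ))
    (fun s => if s = i then (∑ m ∈ Finset.range M, a ^ m / (m.factorial : ℝ))
      else if s = j then Real.exp (a * c) else Real.exp a)
    (fun s n => by split_ifs <;> positivity)
    (fun s => by
      split_ifs
      · have h := hasSum_sum_of_ne_finset_zero (L := SummationFilter.unconditional ℕ) (s := Finset.range M)
          (f := fun n : ℕ => if n < M then a ^ n / (n.factorial : ℝ) else 0)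
          (by intro b hb; simp at hb; simp [hb])
        rwa [Finset.sum_congr rfl (fun m hm => if_pos (Finset.mem_range.1 hm))] at h
      · exact hasSum_expo _
      · exact hE)
  have s4 := hasSum_pi_prod d
    (fun s n => if s = i then (a * c) ^ n / (n.factorial : ℝ)
      else if s = j then (a * c ^ M) ^ n / (n.factorial : ℝ) else a ^ n / (n.factorial : ℝ))
    (fun s => if s = i then Real.exp (a * c)
      else if s = j then Real.exp (a * c ^ M) else Real.exp a)
    (fun s n => by split_ifs <;> positivity)
    (fun s => by
      split_ifs
      · exact hasSum_expo _
      · exact hasSum_expo _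
      · exact hE)
  rw [prod_two i j hij] at s3 s4
  have e1 : ∏ _s : Fin d, Real.exp a = Real.exp a ^ d := by simp
  have e2 : ∏ s : Fin d, (if s ∈ T then Real.exp a - 1 else Real.exp a) =
      (Real.exp a - 1) ^ T.card * (Real.exp a) ^ (d - T.card) := by
    rw [Finset.prod_ite]
    simp only [Finset.prod_const]
    congr 2
    · congr 1; ext; simp
    · rw [← Finset.compl_filter, Finset.card_compl, Fintype.card_fin]
      congr 2; ext; simp
  rw [e1] at s1
  rw [e2] at s2
  have sU := s1.sub s2
  have sB := s3.add s4
  have sUB := sU.add sB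
  -- pointwise facts
  have hP3 : ∀ n : Fin d → ℕ, 0 ≤ ∏ s, (if s = i then (if n s < M then a ^ n s / ((n s).factorial : ℝ) else 0)
      else if s = j then (a * c) ^ n s / ((n s).factorial : ℝ) else a ^ n s / ((n s).factorial : ℝ)) :=
    fun n => Finset.prod_nonneg fun s _ => by split_ifs <;> positivity
  have hP4 : ∀ n : Fin d → ℕ, 0 ≤ ∏ s, (if s = i then (a * c) ^ n s / ((n s).factorial : ℝ)
      else if s = j then (a * c ^ M) ^ n s / ((n s).factorial : ℝ) else a ^ n s / ((n s).factorial : ℝ)) :=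
    fun n => Finset.prod_nonneg fun s _ => by split_ifs <;> positivity
  have hw : ∀ n : Fin d → ℕ, 0 ≤ ∏ s, a ^ n s / ((n s).factorial : ℝ) :=
    fun n => Finset.prod_nonneg fun s _ => hw0 _
  have q3 : ∀ n : Fin d → ℕ, ∏ s, (if s = i then (if n s < M then a ^ n s / ((n s).factorial : ℝ) else 0)
      else if s = j then (a * c) ^ n s / ((n s).factorial : ℝ) else a ^ n s / ((n s).factorial : ℝ))
      = (∏ s, a ^ n s / ((n s).factorial : ℝ)) * ((if n i < M then 1 else 0) * c ^ n j) := by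
    intro n
    have := prod_two i j hij (if n i < M then 1 else 0) (c ^ n j) 1
    rw [one_pow, mul_one] at this
    rw [← this, ← Finset.prod_mul_distrib]
    refine Finset.prod_congr rfl fun s _ => ?_
    by_cases h1 : s = i
    · subst h1; simp
    · by_cases h2 : s = j
      · subst h2; simp only [h1, if_false, if_true, mul_pow]; ring
      · simp [h1, h2]
  have q4 : ∀ n : Fin d → ℕ, ∏ s, (if s = i then (a * c) ^ n s / ((n s).factorial : ℝ)
      else if s = j then (a * c ^ M) ^ n s / ((n s).factorial : ℝ) else a ^ n s / ((n s).factorial : ℝ))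
      = (∏ s, a ^ n s / ((n s).factorial : ℝ)) * (c ^ n i * (c ^ M) ^ n j) := by
    intro n
    have := prod_two i j hij (c ^ n i) ((c ^ M) ^ n j) 1
    rw [one_pow, mul_one] at this
    rw [← this, ← Finset.prod_mul_distrib]
    refine Finset.prod_congr rfl fun s _ => ?_
    by_cases h1 : s = i
    · subst h1; simp only [if_true, mul_pow]; ring
    · by_cases h2 : s = j
      · subst h2; simp only [h1, if_false, if_true, mul_pow]; ring
      · simp [h1, h2]
  have hpt : ∀ n : Fin d → ℕ, 
      (∏ s, a ^ n s / ((n s).factorial : ℝ)) - (∏ s, (if s ∈ T then (if n s = 0 then 0 else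
        a ^ n s / ((n s).factorial : ℝ)) else a ^ n s / ((n s).factorial : ℝ))) ≤
      (∏ s, a ^ n s / ((n s).factorial : ℝ)) * Real.exp (ν * R n) ∧
      (∏ s, a ^ n s / ((n s).factorial : ℝ)) * Real.exp (ν * R n) ≤
      (∏ s, a ^ n s / ((n s).factorial : ℝ)) - (∏ s, (if s ∈ T then (if n s = 0 then 0 else
        a ^ n s / ((n s).factorial : ℝ)) else a ^ n s / ((n s).factorial : ℝ))) +
      ((∏ s, (if s = i then (if n s < M then a ^ n s / ((n s).factorial : ℝ) else 0)
      else if s = j then (a * c) ^ n s / ((n s).factorial : ℝ) else a ^ n s / ((n s).factorial : ℝ))) +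
      ∏ s, (if s = i then (a * c) ^ n s / ((n s).factorial : ℝ)
      else if s = j then (a * c ^ M) ^ n s / ((n s).factorial : ℝ) else a ^ n s / ((n s).factorial : ℝ))) := by
    intro n
    by_cases hz : ∃ l ∈ T, n l = 0
    · have h2 : (∏ s, (if s ∈ T then (if n s = 0 then 0 else
        a ^ n s / ((n s).factorial : ℝ)) else a ^ n s / ((n s).factorial : ℝ))) = 0 := by
        obtain ⟨l, hl, hl0⟩ := hz
        exact Finset.prod_eq_zero (Finset.mem_univ l) (by simp [hl, hl0])
      rw [h2, hR0 n hz]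
      have := hP3 n
      have := hP4 n
      simp only [mul_zero, Real.exp_zero, mul_one, sub_zero]
      constructor <;> linarith
    · push Not at hz
      have h2 : (∏ s, (if s ∈ T then (if n s = 0 then 0 else
        a ^ n s / ((n s).factorial : ℝ)) else a ^ n s / ((n s).factorial : ℝ))) =
          ∏ s, a ^ n s / ((n s).factorial : ℝ) := by
        refine Finset.prod_congr rfl fun s _ => ?_
        by_cases hs : s ∈ T
        · simp [hs, hz s hs]
        · simp [hs]
      rw [h2, sub_self, zero_add, q3, q4, ← mul_add]
      refine ⟨mul_nonneg (hw n) (Real.exp_pos _).le, mul_le_mul_of_nonneg_left ?_ (hw n)⟩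
      refine le_trans ?_ (pow_bound c hc0 hc1 M (n i) (n j) (Nat.one_le_iff_ne_zero.2 (hz i hi)))
      rw [hc, ← Real.exp_nat_mul]
      apply Real.exp_le_exp.2
      have := hR1 n hz
      nlinarith
  have hsum : Summable (fun n : Fin d → ℕ =>
      (∏ s, a ^ n s / ((n s).factorial : ℝ)) * Real.exp (ν * R n)) :=
    Summable.of_nonneg_of_le (fun n => mul_nonneg (hw n) (Real.exp_pos _).le)
      (fun n => (hpt n).2) sUB.summable
  exact ⟨hasSum_le (fun n => (hpt n).1) sU hsum.hasSum,
    hasSum_le (fun n => (hpt n).2) hsum.hasSum sUB⟩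

lemma main_term (d t : ℕ) (htd : t ≤ d) (hd : 1 ≤ d) (y : ℝ) (hy : 0 < y) :
    (y ^ d - (y - 1) ^ t * y ^ (d - t)) / y ^ (d - 1) =
      ∑ i ∈ Finset.range t, (1 - y⁻¹) ^ i := by
  have h := mul_neg_geom_sum (1 - y⁻¹) t
  have h1 : (y - 1) ^ t = (1 - y⁻¹) ^ t * y ^ t := by
    rw [← mul_pow]; congr 1; field_simp
  have h2 : y ^ d = y ^ t * y ^ (d - t) := by rw [← pow_add]; congr 1; omega
  have h3 : y ^ d = y * y ^ (d - 1) := by rw [← pow_succ']; congr 1; omega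
  rw [h1, mul_assoc, ← h2, h3]
  have hy' : y ^ (d - 1) ≠ 0 := by positivity
  rw [div_eq_iff hy']
  have h4 : ∑ i ∈ Finset.range t, (1 - y⁻¹) ^ i = y * (1 - (1 - y⁻¹) ^ t) := by
    rw [← h]; field_simp; ring
  rw [h4]; ring

lemma tendsto_poly_exp (b : ℝ) (hb : 0 < b) (m : ℕ) :
    Tendsto (fun a : ℝ => a ^ m * Real.exp (-(b * a))) atTop (nhds 0) := by
  have h := Real.tendsto_pow_mul_exp_neg_atTop_nhds_zero m
  have h2 := (h.comp (tendsto_id.const_mul_atTop hb)).const_mul ((b ^ m)⁻¹)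
  rw [mul_zero] at h2
  refine h2.congr fun a => ?_
  simp only [Function.comp, id, mul_pow]
  field_simp

lemma key_limit {d : ℕ} (hd : 2 ≤ d) (T : Finset (Fin d)) (i j : Fin d) (hi : i ∈ T) (hij : j ≠ i)
    (ν : ℝ) (hν : ν < 0) (R : (Fin d → ℕ) → ℝ)
    (hR0 : ∀ n, (∃ l ∈ T, n l = 0) → R n = 0)
    (hR1 : ∀ n, (∀ l ∈ T, n l ≠ 0) → ((n i * (1 + n j) : ℕ) : ℝ) / 2 ≤ R n) :
    Tendsto (fun a : ℝ =>
      (∑' n : Fin d → ℕ, (∏ i, a ^ (n i) / ((n i).factorial : ℝ)) * Real.exp (ν * R n)) /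
        Real.exp a ^ (d - 1)) atTop (nhds (T.card : ℝ)) := by
  have key := key_bound T i j hi hij ν hν R hR0 hR1
  set c := Real.exp (ν / 2) with hc
  have hc0 : 0 < c := Real.exp_pos _
  have hc1 : c < 1 := by rw [hc, Real.exp_lt_one_iff]; linarith
  obtain ⟨M, hM⟩ := exists_pow_lt_of_lt_one (sub_pos.2 hc1) hc1
  have hcard : T.card ≤ d := by simpa using Finset.card_le_univ T
  have l1 : Tendsto (fun a : ℝ => ∑ i ∈ Finset.range T.card, (1 - (Real.exp a)⁻¹) ^ i) atTop
      (nhds (T.card : ℝ)) := by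
    have h : Tendsto (fun a : ℝ => 1 - (Real.exp a)⁻¹) atTop (nhds (1 - 0)) :=
      tendsto_const_nhds.sub (tendsto_inv_atTop_zero.comp Real.tendsto_exp_atTop)
    have := tendsto_finsetSum (Finset.range T.card) (fun i _ => h.pow i)
    simpa using this
  have l2 : Tendsto (fun a : ℝ => (∑ m ∈ Finset.range M, (a ^ m * Real.exp (-((1 - c) * a))) /
      (m.factorial : ℝ)) + a ^ 0 * Real.exp (-((1 - c - c ^ M) * a))) atTop (nhds 0) := by
    have h1 := tendsto_finsetSum (Finset.range M)
      (fun m _ => (tendsto_poly_exp (1 - c) (by linarith) m).div_const (m.factorial : ℝ))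
    have h2 := tendsto_poly_exp (1 - c - c ^ M) (by linarith) 0
    simpa using h1.add h2
  have l3 := l1.add l2
  rw [add_zero] at l3
  refine tendsto_of_tendsto_of_tendsto_of_le_of_le' l1 l3 ?_ ?_
  · filter_upwards [eventually_ge_atTop 0] with a ha
    rw [← main_term d T.card hcard (by omega) _ (Real.exp_pos a)]
    exact div_le_div_of_nonneg_right (key M a ha).1 (by positivity)
  · filter_upwards [eventually_ge_atTop 0] with a ha
    rw [← main_term d T.card hcard (by omega) _ (Real.exp_pos a)]
    refine (div_le_div_of_nonneg_right (key M a ha).2 (by positivity)).trans (le_of_eq ?_)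
    rw [add_div]
    congr 1
    have hE : Real.exp a ^ (d - 1) = Real.exp a * Real.exp a ^ (d - 2) := by
      rw [← pow_succ']; congr 1; omega
    have hp : Real.exp a ^ (d - 2) ≠ 0 := by positivity
    rw [hE, ← add_mul, mul_div_mul_right _ _ hp, add_div, pow_zero, one_mul]
    congr 1
    · rw [mul_div_assoc, ← Real.exp_sub, Finset.sum_mul]
      refine Finset.sum_congr rfl fun m _ => ?_
      rw [show a * c - a = -((1 - c) * a) by ring]; ring
    · rw [← Real.exp_add, ← Real.exp_sub]; congr 1; ring

/-- The ratio of the `Q_{d-k,d}` series to the `n_1⋯n_d` series tends to `k/d`;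
series form of the limit of the correlation function `ρ_{d-k}(·;μ_a^{(d)}) → k/d`. -/
theorem correlation_function_ratio_limit
    (d k : ℕ) (hd : 3 ≤ d) (hk1 : 1 ≤ k) (hk2 : k ≤ d - 1) (ν : ℝ) (hν : ν < 0) :
    Tendsto (fun a : ℝ =>
        (∑' n : Fin d → ℕ,
            (∏ i, a ^ (n i) / ((n i).factorial : ℝ)) *
              Real.exp (ν *
                ∑ F ∈ (Finset.univ.filter (fun i : Fin d => (i : ℕ) < d - k)).powerset,
                  ∏ l ∈ Finset.univ \ F, (n l : ℝ))) /
          (∑' n : Fin d → ℕ,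
            (∏ i, a ^ (n i) / ((n i).factorial : ℝ)) * Real.exp (ν * ∏ i, (n i : ℝ))))
      atTop (nhds ((k : ℝ) / d)) := by
  set S : Finset (Fin d) := Finset.univ.filter (fun i : Fin d => (i : ℕ) < d - k) with hS
  have hQ : ∀ n : Fin d → ℕ, ∑ F ∈ S.powerset, ∏ l ∈ Finset.univ \ F, (n l : ℝ) =
      ((∏ l, (if l ∈ S then 1 + n l else n l) : ℕ) : ℝ) := by
    intro n
    have h1 : ∀ F ∈ S.powerset, ∏ l ∈ Finset.univ \ F, (n l : ℝ) =
        (∏ l ∈ S \ F, (n l : ℝ)) * ∏ l ∈ Sᶜ, (n l : ℝ) := by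
      intro F hF
      rw [Finset.mem_powerset] at hF
      rw [← Finset.prod_union]
      · congr 1
        ext l
        have := @hF l
        simp only [Finset.mem_sdiff, Finset.mem_univ, true_and, Finset.mem_union,
          Finset.mem_compl]
        tauto
      · rw [Finset.disjoint_left]
        intro l h1 h2
        exact (Finset.mem_compl.1 h2) (Finset.mem_sdiff.1 h1).1
    rw [Finset.sum_congr rfl h1, ← Finset.sum_mul]
    have h2 := Finset.prod_add (fun _ : Fin d => (1 : ℝ)) (fun l => (n l : ℝ)) S
    simp only [Finset.prod_const_one, one_mul] at h2
    rw [← h2]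
    push_cast
    rw [← Finset.prod_mul_prod_compl S]
    congr 1
    · exact Finset.prod_congr rfl fun l hl => by simp [hl]
    · exact Finset.prod_congr rfl fun l hl => by simp [Finset.mem_compl.1 hl]
  have two_le : ∀ (i j : Fin d) (_ : j ≠ i) (g : Fin d → ℕ), (∀ l, 1 ≤ g l) →
      g i * g j ≤ ∏ l, g l := by
    intro i j hij g hg
    rw [← Finset.prod_pair (f := g) hij.symm]
    exact Finset.prod_le_prod_of_subset_of_one_le' (Finset.subset_univ _) (fun l _ _ => hg l)
  let i0 : Fin d := ⟨d - 1, by omega⟩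
  let j0 : Fin d := ⟨0, by omega⟩
  have hij : j0 ≠ i0 := by
    intro h
    have := congrArg Fin.val h
    simp only [i0, j0] at this
    omega
  have hi0 : i0 ∉ S := by simp [hS, i0]; omega
  have hj0 : j0 ∈ S := by simp [hS, j0]; omega
  have hcS : Sᶜ.card = k := by
    have : S.card = d - k := by
      rw [hS, Fin.card_filter_val_lt]; omega
    rw [Finset.card_compl, Fintype.card_fin, this]; omega
  have L1 := key_limit (by omega) Sᶜ i0 j0 (Finset.mem_compl.2 hi0) hij ν hν
    (fun n => ∑ F ∈ S.powerset, ∏ l ∈ Finset.univ \ F, (n l : ℝ))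
    (by
      rintro n ⟨l, hl, hl0⟩
      simp only [hQ]
      rw [Nat.cast_eq_zero]
      exact Finset.prod_eq_zero (Finset.mem_univ l) (by simp [Finset.mem_compl.1 hl, hl0]))
    (by
      intro n hn
      simp only [hQ]
      have := two_le i0 j0 hij (fun l => if l ∈ S then 1 + n l else n l) (by
        intro l
        by_cases hl : l ∈ S
        · simp [hl]
        · simpa [hl] using Nat.one_le_iff_ne_zero.2 (hn l (Finset.mem_compl.2 hl)))
      simp only [hi0, hj0, if_true, if_false] at this
      have h' : ((n i0 * (1 + n j0) : ℕ) : ℝ) ≤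
        ((∏ l, (if l ∈ S then 1 + n l else n l) : ℕ) : ℝ) := by exact_mod_cast this
      have h'' : (0 : ℝ) ≤ ((n i0 * (1 + n j0) : ℕ) : ℝ) := Nat.cast_nonneg _
      linarith)
  have L2 := key_limit (by omega) Finset.univ i0 j0 (Finset.mem_univ _) hij ν hν
    (fun n => ∏ i, (n i : ℝ))
    (by
      rintro n ⟨l, hl, hl0⟩
      exact Finset.prod_eq_zero (Finset.mem_univ l) (by simp [hl0]))
    (by
      intro n hn
      have h1 : ∀ l, 1 ≤ n l := fun l => Nat.one_le_iff_ne_zero.2 (hn l (Finset.mem_univ l))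
      have := two_le i0 j0 hij n h1
      have h2 : n i0 * (1 + n j0) ≤ 2 * ∏ l, n l := by nlinarith [h1 i0, h1 j0]
      have h' : ((n i0 * (1 + n j0) : ℕ) : ℝ) ≤ ((2 * ∏ l, n l : ℕ) : ℝ) := by exact_mod_cast h2
      rw [Nat.cast_mul 2, Nat.cast_prod] at h'
      push_cast at h' ⊢
      linarith)
  rw [hcS] at L1
  rw [Finset.card_univ, Fintype.card_fin] at L2
  have hd0 : (d : ℝ) ≠ 0 := by positivity
  refine (L1.div L2 hd0).congr fun a => ?_
  exact div_div_div_cancel_right₀ (by positivity) _ _
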